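/- Let m ≥ 0, d ≥ 1 be integers with 2m + d ≥ 3, let c > 0, and let α be a real number with α > c²/4. Set β := m + d/2, a := (2m+d−2)/(2m+d). Let φ be a real-valued C² solution on (−1,1) of ((1−η)(1+η)^β φ′(η))′ + (α − c²(1+η)/8)(1+η)^{β−1} φ(η) = 0 which extends continuously to (−1,1] and satisfies the normalization ∫_{−1}^{1} (1+t)^{β−1} φ(t)² dt = 2^{β−1}. Then sup_{η ∈ [a,1]} √((1−η)(1+η)^β) · |φ(η)| ≤ √(2^{β+1}(β−1)). -/

import Mathlib

open MeasureTheory Real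

noncomputable section

/-!
Write `w` for the weight, `p` for the leading coefficient and `u = p φ'` for the flux. Two energies,
quadratic forms in `φ` and `u`, have derivatives that are multiples of `w φ²` alone. The right
energy vanishes at `1`, where the flux must vanish because `φ` stays bounded, and it dominates a
multiple of `p φ²`; integrating from `η` to `1` gives `p φ² ≤ 4 ∫_η^1 w φ²` at every
`η ≥ (β - 1) / β`. This suffices when `β ≥ 2`. When `β < 2`, the left energy vanishes at `-1`,
because finite mass bounds `u` and `w φ` there, and it yields `p φ² ≤ 4 ∫_{-1}^η w φ²`. Averaging
the two estimates improves the constant `4` to `2 ≤ 4 (β - 1)`.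
-/

open Set Filter Topology

/-! ### Endpoints and mean values -/

section Endpoints

variable {a b : ℝ} {f : ℝ → ℝ}

lemma continuousOn_Ioc_of_tendsto (hf : ContinuousOn f (Ioo a b))
    (hb : Tendsto f (𝓝[<] b) (𝓝 (f b))) : ContinuousOn f (Ioc a b) := by
  rintro x ⟨hax, hxb⟩
  obtain rfl | hxb := hxb.eq_or_lt
  · exact (continuousWithinAt_Iio_iff_Iic.1 hb).mono Ioc_subset_Iic_self
  · exact (hf.continuousAt (Ioo_mem_nhds hax hxb)).continuousWithinAt

lemma continuousOn_Ico_of_tendsto (hf : ContinuousOn f (Ioo a b))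
    (ha : Tendsto f (𝓝[>] a) (𝓝 (f a))) : ContinuousOn f (Ico a b) := by
  rintro x ⟨hax, hxb⟩
  obtain rfl | hax := hax.eq_or_lt
  · exact (continuousWithinAt_Ioi_iff_Ici.1 ha).mono Ico_subset_Ici_self
  · exact (hf.continuousAt (Ioo_mem_nhds hax hxb)).continuousWithinAt

end Endpoints

section MeanValue

variable {a b t : ℝ} {f f' u : ℝ → ℝ}

lemma abs_sub_le_mul_abs_sub_of_abs_deriv_le {g g' : ℝ → ℝ} {K : ℝ} (hab : a < b)
    (hfc : ContinuousOn f (Icc a b)) (hf : ∀ s ∈ Ioo a b, HasDerivAt f (f' s) s)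
    (hgc : ContinuousOn g (Icc a b)) (hg : ∀ s ∈ Ioo a b, HasDerivAt g (g' s) s)
    (hg' : ∀ s ∈ Ioo a b, g' s ≠ 0) (hle : ∀ s ∈ Ioo a b, |f' s| ≤ K * |g' s|) :
    |f b - f a| ≤ K * |g b - g a| := by
  obtain ⟨ξ, hξ, hslope⟩ := exists_ratio_hasDerivAt_eq_ratio_slope f f' hab hfc hf g g' hgc hg
  refine le_of_mul_le_mul_right ?_ (abs_pos.2 (hg' ξ hξ))
  calc |f b - f a| * |g' ξ| = |g b - g a| * |f' ξ| := by rw [← abs_mul, ← hslope, abs_mul]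
    _ ≤ |g b - g a| * (K * |g' ξ|) := by gcongr; exact hle ξ hξ
    _ = K * |g b - g a| * |g' ξ| := by ring

lemma exists_abs_mul_deriv_le_of_hasDerivAt (htb : t < b)
    (hf : ∀ s ∈ Ico t b, HasDerivAt f (f' s) s) :
    ∃ ξ ∈ Ioo t b, |(b - ξ) * f' ξ| ≤ 2 * |f ((t + b) / 2) - f t| := by
  have hmid : t < (t + b) / 2 := by linarith
  obtain ⟨ξ, ⟨htξ, hξ⟩, hslope⟩ := exists_hasDerivAt_eq_slope f f' hmid
    (fun s hs ↦ (hf s ⟨hs.1, by linarith [hs.2]⟩).continuousAt.continuousWithinAt)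
    (fun s hs ↦ hf s ⟨hs.1.le, by linarith [hs.2]⟩)
  refine ⟨ξ, ⟨htξ, by linarith⟩, ?_⟩
  rw [eq_div_iff (by linarith)] at hslope
  calc |(b - ξ) * f' ξ| = (b - ξ) * |f' ξ| := by
        rw [abs_mul, abs_of_pos (show 0 < b - ξ by linarith)]
    _ ≤ 2 * ((t + b) / 2 - t) * |f' ξ| := by gcongr; linarith
    _ = 2 * |f ((t + b) / 2) - f t| := by
        rw [← hslope, abs_mul, abs_of_pos (show 0 < (t + b) / 2 - t by linarith)]
        ring

-- A nonzero limit of `u` would make `f'` at least of order `1 / (b - t)`, hence `f` unbounded.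
lemma tendsto_zero_of_abs_le_mul_deriv {B C L : ℝ} (hab : a < b)
    (hf : ∀ s ∈ Ioo a b, HasDerivAt f (f' s) s) (hfL : Tendsto f (𝓝[<] b) (𝓝 L))
    (hu : ∀ s ∈ Ioo a b, |u s| ≤ B * |(b - s) * f' s|)
    (hlip : ∀ s ∈ Ioo a b, ∀ t ∈ Ioo a b, |u s - u t| ≤ C * |s - t|) :
    Tendsto u (𝓝[<] b) (𝓝 0) := by
  have hmid : Tendsto (fun t ↦ (t + b) / 2) (𝓝[<] b) (𝓝[<] b) := by
    refine tendsto_nhdsWithin_iff.2 ⟨tendsto_nhdsWithin_of_tendsto_nhds ?_, ?_⟩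
    · exact (by fun_prop : Continuous fun t ↦ (t + b) / 2).tendsto' b b (by ring)
    · filter_upwards [self_mem_nhdsWithin] with t ht
      have : t < b := ht
      change (t + b) / 2 < b
      linarith
  have hbound : Tendsto (fun t ↦ |B| * (2 * |f ((t + b) / 2) - f t|) + |C| * (b - t))
      (𝓝[<] b) (𝓝 0) := by
    have hsub : Tendsto (fun t ↦ b - t) (𝓝[<] b) (𝓝 0) :=
      tendsto_nhdsWithin_of_tendsto_nhds ((continuous_sub_left b).tendsto' b 0 (sub_self b))
    simpa using ((((hfL.comp hmid).sub hfL).abs.const_mul 2).const_mul |B|).add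
      (hsub.const_mul |C|)
  refine squeeze_zero_norm' ?_ hbound
  filter_upwards [Ioo_mem_nhdsLT hab] with t ht
  obtain ⟨ξ, ⟨htξ, hξb⟩, hξ⟩ := exists_abs_mul_deriv_le_of_hasDerivAt ht.2
    fun s hs ↦ hf s ⟨ht.1.trans_le hs.1, hs.2⟩
  have hξmem : ξ ∈ Ioo a b := ⟨ht.1.trans htξ, hξb⟩
  calc |u t| ≤ |u ξ| + |u t - u ξ| := by simpa using abs_add_le (u ξ) (u t - u ξ)
    _ ≤ |B| * |(b - ξ) * f' ξ| + |C| * |t - ξ| := by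
        gcongr
        · exact (hu ξ hξmem).trans (by gcongr; exact le_abs_self B)
        · exact (hlip t ht ξ hξmem).trans (by gcongr; exact le_abs_self C)
    _ ≤ |B| * (2 * |f ((t + b) / 2) - f t|) + |C| * (b - t) := by
        rw [abs_sub_comm t ξ, abs_of_pos (sub_pos.2 htξ)]
        gcongr

end MeanValue

/-! ### The radial prolate equation -/

section Prolate

/-- The weight `(1 + t) ^ (β - 1)` of the mass in the radial prolate equation. -/
def prolateWeight (β t : ℝ) : ℝ := (1 + t) ^ (β - 1)

/-- The leading coefficient `(1 - t) (1 + t) ^ β` of the radial prolate operator. -/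
def prolateCoeff (β t : ℝ) : ℝ := (1 - t) * (1 + t) ^ β

/-- The flux `(1 - t) (1 + t) ^ β φ'(t)` of the radial prolate equation. -/
def prolateFlux (β : ℝ) (φ : ℝ → ℝ) (t : ℝ) : ℝ := (1 - t) * (1 + t) ^ β * deriv φ t

/-- A `C²` solution of the radial prolate equation on `(-1, 1)` that extends continuously to `1`.
The parameter `k` stands for `c² / 8`. -/
structure IsProlateSolution (β k α : ℝ) (φ : ℝ → ℝ) : Prop where
  contDiffOn : ContDiffOn ℝ 2 φ (Ioo (-1) 1)
  deriv_flux_add : ∀ t ∈ Ioo (-1 : ℝ) 1,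
    deriv (prolateFlux β φ) t + (α - k * (1 + t)) * prolateWeight β t * φ t = 0
  continuousWithinAt_one : ContinuousWithinAt φ (Ioo (-1) 1) 1

variable {β k α t η : ℝ} {φ : ℝ → ℝ}

lemma nonneg_of_sub_one_div_le (hβ : 1 ≤ β) (hη : (β - 1) / β ≤ η) : 0 ≤ η :=
  le_trans (div_nonneg (by linarith) (by linarith)) hη

lemma prolateWeight_pos (ht : -1 < t) : 0 < prolateWeight β t :=
  rpow_pos_of_pos (by linarith) _

lemma prolateWeight_nonneg (ht : -1 ≤ t) : 0 ≤ prolateWeight β t :=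
  rpow_nonneg (by linarith) _

lemma prolateWeight_le_one (hβ : 1 ≤ β) (ht : t ∈ Icc (-1) 0) : prolateWeight β t ≤ 1 :=
  rpow_le_one (by linarith [ht.1]) (by linarith [ht.2]) (by linarith)

lemma prolateCoeff_eq (ht : -1 < t) :
    prolateCoeff β t = (1 - t) * (1 + t) * prolateWeight β t := by
  rw [prolateCoeff, prolateWeight, mul_assoc, mul_comm (1 + t), ← rpow_add_one (by linarith),
    sub_add_cancel]

lemma prolateCoeff_pos (ht : t ∈ Ioo (-1) 1) : 0 < prolateCoeff β t :=
  mul_pos (sub_pos.2 ht.2) (rpow_pos_of_pos (by linarith [ht.1]) _)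

lemma prolateCoeff_nonneg (ht : t ∈ Icc (-1) 1) : 0 ≤ prolateCoeff β t :=
  mul_nonneg (sub_nonneg.2 ht.2) (rpow_nonneg (by linarith [ht.1]) _)

lemma hasDerivAt_prolateWeight (ht : -1 < t) :
    HasDerivAt (prolateWeight β) ((β - 1) * prolateWeight β t / (1 + t)) t := by
  have hy : 1 + t ≠ 0 := by linarith
  refine (((hasDerivAt_id' t).const_add 1).rpow_const (p := β - 1) (.inl hy)).congr_deriv ?_
  rw [rpow_sub_one hy, prolateWeight]
  ring

lemma hasDerivAt_inv_prolateWeight (ht : -1 < t) :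
    HasDerivAt (prolateWeight β)⁻¹ (-((β - 1) / ((1 + t) * prolateWeight β t))) t := by
  have hw := prolateWeight_pos (β := β) ht
  have hy : 0 < 1 + t := by linarith
  refine ((hasDerivAt_prolateWeight ht).inv hw.ne').congr_deriv ?_
  field_simp

lemma hasDerivAt_prolateCoeff (ht : -1 < t) :
    HasDerivAt (prolateCoeff β) (prolateWeight β t * (β * (1 - t) - (1 + t))) t := by
  have hy : 1 + t ≠ 0 := by linarith
  refine (((hasDerivAt_id' t).const_sub 1).mul
    (((hasDerivAt_id' t).const_add 1).rpow_const (p := β) (.inl hy))).congr_deriv ?_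
  rw [show (1 + t) ^ β = (1 + t) ^ (β - 1) * (1 + t) by rw [← rpow_add_one hy, sub_add_cancel],
    prolateWeight]
  ring

lemma continuousOn_prolateWeight : ContinuousOn (prolateWeight β) (Ioi (-1)) :=
  fun _ ht ↦ (hasDerivAt_prolateWeight ht).continuousAt.continuousWithinAt

lemma continuousOn_prolateCoeff : ContinuousOn (prolateCoeff β) (Ioi (-1)) :=
  fun _ ht ↦ (hasDerivAt_prolateCoeff ht).continuousAt.continuousWithinAt

lemma prolateFlux_one : prolateFlux β φ 1 = 0 := by simp [prolateFlux]

namespace IsProlateSolution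

lemma hasDerivAt (h : IsProlateSolution β k α φ) (ht : t ∈ Ioo (-1) 1) :
    HasDerivAt φ (prolateFlux β φ t / prolateCoeff β t) t := by
  have hφ : DifferentiableAt ℝ φ t :=
    (h.contDiffOn.differentiableOn two_ne_zero).differentiableAt (isOpen_Ioo.mem_nhds ht)
  exact hφ.hasDerivAt.congr_deriv (mul_div_cancel_left₀ _ (prolateCoeff_pos ht).ne').symm

lemma hasDerivAt_flux (h : IsProlateSolution β k α φ) (ht : t ∈ Ioo (-1) 1) :
    HasDerivAt (prolateFlux β φ) (-((α - k * (1 + t)) * prolateWeight β t * φ t)) t := by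
  have hφ' : DifferentiableAt ℝ (deriv φ) t :=
    ((h.contDiffOn.deriv_of_isOpen (m := 1) isOpen_Ioo (by norm_num)).differentiableOn
      one_ne_zero).differentiableAt (isOpen_Ioo.mem_nhds ht)
  have hflux : DifferentiableAt ℝ (prolateFlux β φ) t :=
    (hasDerivAt_prolateCoeff ht.1).differentiableAt.mul hφ'
  exact hflux.hasDerivAt.congr_deriv (by linear_combination h.deriv_flux_add t ht)

lemma tendsto_one (h : IsProlateSolution β k α φ) : Tendsto φ (𝓝[<] 1) (𝓝 (φ 1)) :=
  h.continuousWithinAt_one.tendsto.mono_left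
    (nhdsWithin_le_of_mem (Ioo_mem_nhdsLT (by norm_num)))

lemma continuousOn (h : IsProlateSolution β k α φ) : ContinuousOn φ (Ioc (-1) 1) :=
  continuousOn_Ioc_of_tendsto h.contDiffOn.continuousOn h.tendsto_one

lemma continuousOn_mass (h : IsProlateSolution β k α φ) :
    ContinuousOn (fun t ↦ prolateWeight β t * φ t ^ 2) (Ioc (-1) 1) :=
  (continuousOn_prolateWeight.mono Ioc_subset_Ioi_self).mul (h.continuousOn.pow 2)

lemma tendsto_flux_one (h : IsProlateSolution β k α φ) :
    Tendsto (prolateFlux β φ) (𝓝[<] 1) (𝓝 0) := by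
  have hIoo : Ioo (0 : ℝ) 1 ⊆ Ioo (-1) 1 := Ioo_subset_Ioo_left (by norm_num)
  have hIcc : Icc (0 : ℝ) 1 ⊆ Ioc (-1) 1 := fun s hs ↦ ⟨by linarith [hs.1], hs.2⟩
  have hw : ContinuousOn (prolateWeight β) (Icc 0 1) :=
    continuousOn_prolateWeight.mono fun s hs ↦ (hIcc hs).1
  obtain ⟨C, hC⟩ := isCompact_Icc.exists_bound_of_continuousOn
    (f := fun s ↦ -((α - k * (1 + s)) * prolateWeight β s * φ s))
    (((by fun_prop : ContinuousOn (fun s : ℝ ↦ α - k * (1 + s)) (Icc 0 1)).mul hw).mul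
      (h.continuousOn.mono hIcc)).neg
  obtain ⟨B, hB⟩ := isCompact_Icc.exists_bound_of_continuousOn
    (f := fun s ↦ (1 + s) * prolateWeight β s)
    ((by fun_prop : ContinuousOn (fun s : ℝ ↦ 1 + s) (Icc 0 1)).mul hw)
  refine tendsto_zero_of_abs_le_mul_deriv (B := B) zero_lt_one (fun s hs ↦ h.hasDerivAt (hIoo hs))
    h.tendsto_one (fun s hs ↦ ?_) fun s hs t ht ↦
      (convex_Ioo 0 1).norm_image_sub_le_of_norm_hasDerivWithin_le
        (fun x hx ↦ (h.hasDerivAt_flux (hIoo hx)).hasDerivWithinAt)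
        (fun x hx ↦ hC x (Ioo_subset_Icc_self hx)) ht hs
  have hp := prolateCoeff_pos (β := β) (hIoo hs)
  calc |prolateFlux β φ s|
      = |(1 + s) * prolateWeight β s| *
          |(1 - s) * (prolateFlux β φ s / prolateCoeff β s)| := by
        rw [← abs_mul, ← mul_assoc, mul_comm _ (1 - s), ← mul_assoc, ← prolateCoeff_eq (hIoo hs).1,
          mul_div_cancel₀ _ hp.ne']
    _ ≤ B * |(1 - s) * (prolateFlux β φ s / prolateCoeff β s)| := by
        gcongr
        exact hB s (Ioo_subset_Icc_self hs)

lemma continuousOn_flux (h : IsProlateSolution β k α φ) :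
    ContinuousOn (prolateFlux β φ) (Ioc (-1) 1) := by
  refine continuousOn_Ioc_of_tendsto
    (fun s hs ↦ (h.hasDerivAt_flux hs).continuousAt.continuousWithinAt) ?_
  rw [prolateFlux_one]
  exact h.tendsto_flux_one

end IsProlateSolution

/-! ### Control by the mass on the right -/

/-- The factor of `prolateCoeff β t * φ t ^ 2` in `rightEnergy`. -/
def rightEnergyCoeff (β k α t : ℝ) : ℝ :=
  α - k * (1 + t) + (β - 1) / 2 - ((β - 1) / 2) ^ 2 * (1 - t) / (1 + t)

/-- The energy controlling a solution by its mass on the right. With the weight `w`, the leading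
coefficient `p` and the flux `u = p φ'`, it is
`u² / w + (β - 1) (1 - t) u φ + (α - k (1 + t) + (β - 1) / 2) p φ²` after completing the square.
The cross term is chosen to remove `φ'²` from the derivative. -/
def rightEnergy (β k α : ℝ) (φ : ℝ → ℝ) (t : ℝ) : ℝ :=
  ((β - 1) / 2 * (1 - t) * prolateWeight β t * φ t + prolateFlux β φ t) ^ 2 / prolateWeight β t +
    rightEnergyCoeff β k α t * (prolateCoeff β t * φ t ^ 2)

/-- The rate at which `rightEnergy` decreases per unit of mass. -/
def rightEnergyRate (β k α t : ℝ) : ℝ :=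
  2 * t * (α - k * (1 + t)) + (β - 1) / 2 * ((β + 1) * t - (β - 1)) + k * (1 - t) * (1 + t)

lemma rightEnergy_one : rightEnergy β k α φ 1 = 0 := by
  simp [rightEnergy, prolateCoeff, prolateFlux_one]

lemma le_rightEnergyCoeff (hβ : 1 ≤ β) (hη : (β - 1) / β ≤ η) :
    α - k * (1 + η) + (β - 1) / 4 ≤ rightEnergyCoeff β k α η := by
  have hη0 : 0 ≤ η := nonneg_of_sub_one_div_le (by linarith) hη
  rw [div_le_iff₀ (by linarith)] at hη
  have hsq : ((β - 1) / 2) ^ 2 * (1 - η) / (1 + η) ≤ (β - 1) / 4 := by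
    rw [div_le_iff₀ (by linarith)]
    nlinarith
  rw [rightEnergyCoeff]
  linarith

lemma rightEnergyCoeff_pos (hβ : 1 < β) (hk : 0 ≤ k) (hα : 2 * k ≤ α)
    (hη : (β - 1) / β ≤ η) (hη1 : η ≤ 1) : 0 < rightEnergyCoeff β k α η := by
  have hkη : 0 ≤ k * (1 - η) := mul_nonneg hk (by linarith)
  linarith [le_rightEnergyCoeff (k := k) (α := α) hβ.le hη]

lemma rightEnergyRate_le (hβ : 1 ≤ β) (hk : 0 ≤ k) (hα : 2 * k ≤ α)
    (hη : (β - 1) / β ≤ η) (hηt : η ≤ t) (ht : t ≤ 1) :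
    rightEnergyRate β k α t ≤ 4 * rightEnergyCoeff β k α η := by
  have hη0 : 0 ≤ η := nonneg_of_sub_one_div_le (by linarith) hη
  have hkη : 0 ≤ k * (1 - η) := mul_nonneg hk (by linarith)
  have hβt : 0 ≤ (β + 1) * (1 - t) := mul_nonneg (by linarith) (by linarith)
  calc rightEnergyRate β k α t
      = 2 * (α - 2 * k) * t + (β - 1) / 2 * (2 - (β + 1) * (1 - t)) +
          k * (1 - t) * (1 + 3 * t) := by rw [rightEnergyRate]; ring
    _ ≤ 2 * (α - 2 * k) * 1 + (β - 1) / 2 * 2 + k * (1 - η) * 4 := by gcongr <;> linarith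
    _ ≤ 4 * (α - k * (1 + η) + (β - 1) / 4) := by linarith
    _ ≤ 4 * rightEnergyCoeff β k α η := by gcongr; exact le_rightEnergyCoeff hβ hη

lemma rightEnergyCoeff_mul_le_rightEnergy (ht : -1 < t) :
    rightEnergyCoeff β k α t * (prolateCoeff β t * φ t ^ 2) ≤ rightEnergy β k α φ t :=
  le_add_of_nonneg_left (div_nonneg (sq_nonneg _) (prolateWeight_pos ht).le)

namespace IsProlateSolution

lemma hasDerivAt_rightEnergy (h : IsProlateSolution β k α φ) (ht : t ∈ Ioo (-1) 1) :
    HasDerivAt (rightEnergy β k α φ)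
      (-(rightEnergyRate β k α t * (prolateWeight β t * φ t ^ 2))) t := by
  have hw := prolateWeight_pos (β := β) ht.1
  have hy : 0 < 1 + t := by linarith [ht.1]
  have hz : 0 < 1 - t := by linarith [ht.2]
  have hdy : HasDerivAt (fun s : ℝ ↦ 1 + s) 1 t := (hasDerivAt_id' t).const_add 1
  have hdz : HasDerivAt (fun s : ℝ ↦ 1 - s) (-1) t := (hasDerivAt_id' t).const_sub 1
  have hdw := hasDerivAt_prolateWeight (β := β) ht.1
  have hdφ := h.hasDerivAt ht
  have hdcoeff : HasDerivAt (rightEnergyCoeff β k α) _ t :=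
    (((hdy.const_mul k).const_sub α).add_const ((β - 1) / 2)).sub
      ((hdz.const_mul (((β - 1) / 2) ^ 2)).div hdy hy.ne')
  have hdsq := (((hdz.const_mul ((β - 1) / 2)).mul hdw).mul hdφ).add (h.hasDerivAt_flux ht)
  refine (((hdsq.pow 2).div hdw hw.ne').add
    (hdcoeff.mul ((hasDerivAt_prolateCoeff ht.1).mul (hdφ.pow 2)))).congr_deriv ?_
  simp only [Pi.add_apply, Pi.mul_apply, Pi.pow_apply, rightEnergyCoeff, rightEnergyRate,
    prolateCoeff_eq ht.1]
  field_simp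
  ring

lemma continuousOn_rightEnergy (h : IsProlateSolution β k α φ) :
    ContinuousOn (rightEnergy β k α φ) (Ioc (-1) 1) := by
  have hy : ∀ t ∈ Ioc (-1 : ℝ) 1, 1 + t ≠ 0 := fun t ht ↦ by linarith [ht.1]
  have hw : ContinuousOn (prolateWeight β) (Ioc (-1) 1) :=
    continuousOn_prolateWeight.mono Ioc_subset_Ioi_self
  have hcoeff : ContinuousOn (rightEnergyCoeff β k α) (Ioc (-1) 1) := by
    unfold rightEnergyCoeff
    fun_prop (disch := assumption)
  have hlin : ContinuousOn (fun t ↦ (β - 1) / 2 * (1 - t)) (Ioc (-1) 1) := by fun_prop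
  exact (((((hlin.mul hw).mul h.continuousOn).add h.continuousOn_flux).pow 2).div hw
    fun t ht ↦ (prolateWeight_pos ht.1).ne').add
    (hcoeff.mul ((continuousOn_prolateCoeff.mono Ioc_subset_Ioi_self).mul (h.continuousOn.pow 2)))

lemma coeff_mul_sq_le_four_mul_integral_right (h : IsProlateSolution β k α φ) (hβ : 1 < β)
    (hk : 0 ≤ k) (hα : 2 * k ≤ α) (hη : (β - 1) / β ≤ η) (hη1 : η ≤ 1) :
    prolateCoeff β η * φ η ^ 2 ≤ 4 * ∫ t in η..1, prolateWeight β t * φ t ^ 2 := by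
  have hη0 : 0 ≤ η := nonneg_of_sub_one_div_le (by linarith) hη
  have hIcc : Icc η 1 ⊆ Ioc (-1) 1 := fun t ht ↦ ⟨by linarith [ht.1], ht.2⟩
  have henergy : rightEnergy β k α φ η ≤
      ∫ t in η..1, 4 * rightEnergyCoeff β k α η * (prolateWeight β t * φ t ^ 2) := by
    have hmass : ContinuousOn
        (fun t ↦ 4 * rightEnergyCoeff β k α η * (prolateWeight β t * φ t ^ 2)) (Icc η 1) :=
      continuousOn_const.mul (h.continuousOn_mass.mono hIcc)
    simpa [rightEnergy_one] using intervalIntegral.sub_le_integral_of_hasDeriv_right_of_le hη1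
      (h.continuousOn_rightEnergy.mono hIcc).neg
      (fun t ht ↦ (h.hasDerivAt_rightEnergy ⟨by linarith [ht.1], ht.2⟩).neg.hasDerivWithinAt)
      hmass.integrableOn_Icc fun t ht ↦ by
        rw [neg_neg]
        exact mul_le_mul_of_nonneg_right (rightEnergyRate_le hβ.le hk hα hη ht.1.le ht.2.le)
          (mul_nonneg (prolateWeight_pos (by linarith [ht.1])).le (sq_nonneg _))
  refine le_of_mul_le_mul_left ?_ (rightEnergyCoeff_pos hβ hk hα hη hη1)
  calc rightEnergyCoeff β k α η * (prolateCoeff β η * φ η ^ 2)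
      ≤ rightEnergy β k α φ η := rightEnergyCoeff_mul_le_rightEnergy (by linarith)
    _ ≤ ∫ t in η..1, 4 * rightEnergyCoeff β k α η * (prolateWeight β t * φ t ^ 2) := henergy
    _ = _ := by rw [intervalIntegral.integral_const_mul]; ring

end IsProlateSolution

/-! ### Control by the mass on the left -/

/-- The factor of `prolateCoeff β t * φ t ^ 2 / 4` in `leftEnergy`. -/
def leftEnergyCoeff (β k α t : ℝ) : ℝ :=
  4 * k * (1 + t) + (4 * (α - 2 * k) + 2 * β) * ((1 + t) / (1 - t)) + ((1 + t) / (1 - t)) ^ 2 +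
    β * (2 - β)

/-- The energy controlling a solution by its mass on the left. With `r = √((1 + t) / 2)`, the
function `χ = √(1 - r²) r ^ (β - 1 / 2) φ` satisfies `χ'' + Q χ = 0` for some `Q`, and `leftEnergy`
is, up to a constant, `r ((r χ' - 3 / 2 χ)² + (r² Q + 3 / 4) χ²)`, whose derivative in `r` is
`(6 r² Q + r³ Q' + 3) χ²`. -/
def leftEnergy (β k α : ℝ) (φ : ℝ → ℝ) (t : ℝ) : ℝ :=
  prolateCoeff β t *
    ((prolateFlux β φ t / ((1 - t) * prolateWeight β t) +
        (β - 2 - (1 + t) / (1 - t)) / 2 * φ t) ^ 2 + leftEnergyCoeff β k α t / 4 * φ t ^ 2)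

/-- The rate at which `leftEnergy` increases per unit of mass. -/
def leftEnergyRate (β k α t : ℝ) : ℝ :=
  3 * k * (1 + t) * (1 - t) + (4 * (α - 2 * k) + β ^ 2 - 1) / 2 * (1 + t) +
    (2 * (α - 2 * k) + β + 1) * ((1 + t) / (1 - t)) + ((1 + t) / (1 - t)) ^ 2 + β * (2 - β)

lemma leftEnergy_neg_one (hβ : β ≠ 0) : leftEnergy β k α φ (-1) = 0 := by
  simp [leftEnergy, prolateCoeff, zero_rpow hβ]

lemma leftEnergyCoeff_pos (hβ : 0 < β) (hβ2 : β < 2) (hk : 0 ≤ k) (hα : 2 * k ≤ α)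
    (ht : t ∈ Ioo (-1) 1) : 0 < leftEnergyCoeff β k α t := by
  have hy : 0 < 1 + t := by linarith [ht.1]
  have hz : 0 < 1 - t := by linarith [ht.2]
  have hα' : 0 ≤ α - 2 * k := by linarith
  have hβ' : 0 < 2 - β := by linarith
  unfold leftEnergyCoeff
  positivity

lemma leftEnergyRate_le (hβ : 1 ≤ β) (hk : 0 ≤ k) (hα : 2 * k ≤ α)
    (hη : (β - 1) / β ≤ η) (hη1 : η < 1) (ht : -1 ≤ t) (htη : t ≤ η) :
    leftEnergyRate β k α t ≤ leftEnergyCoeff β k α η := by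
  have hη0 : 0 ≤ η := nonneg_of_sub_one_div_le (by linarith) hη
  rw [div_le_iff₀ (by linarith)] at hη
  have hy : 0 ≤ 1 + t := by linarith
  have hα' : 0 ≤ α - 2 * k := by linarith
  have hratio : (1 + t) / (1 - t) ≤ (1 + η) / (1 - η) := by
    gcongr
  have hratio0 : 0 ≤ (1 + t) / (1 - t) := div_nonneg hy (by linarith)
  have hkterm : 3 * k * (1 + t) * (1 - t) ≤ 4 * k * (1 + η) := by nlinarith [sq_nonneg t]
  have hlinear : (4 * (α - 2 * k) + β ^ 2 - 1) / 2 * (1 + η) ≤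
      (2 * (α - 2 * k) + β - 1) * ((1 + η) / (1 - η)) := by
    have hcoeff : (4 * (α - 2 * k) + β ^ 2 - 1) / 2 * (1 - η) ≤ 2 * (α - 2 * k) + β - 1 := by
      have hA : 2 * (α - 2 * k) * (1 - η) ≤ 2 * (α - 2 * k) * 1 := by gcongr; linarith
      have hB : (β - 1) / 2 * ((β + 1) * (1 - η)) ≤ (β - 1) / 2 * 2 := by gcongr; linarith
      linarith
    rw [← mul_div_assoc, le_div_iff₀ (by linarith), mul_right_comm]
    gcongr
  calc leftEnergyRate β k α t
      ≤ 4 * k * (1 + η) + (4 * (α - 2 * k) + β ^ 2 - 1) / 2 * (1 + η) +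
          (2 * (α - 2 * k) + β + 1) * ((1 + η) / (1 - η)) + ((1 + η) / (1 - η)) ^ 2 +
          β * (2 - β) := by
        unfold leftEnergyRate
        gcongr
        nlinarith
    _ ≤ leftEnergyCoeff β k α η := by rw [leftEnergyCoeff]; linarith

lemma leftEnergyCoeff_mul_le_leftEnergy (ht : t ∈ Icc (-1) 1) :
    leftEnergyCoeff β k α t / 4 * (prolateCoeff β t * φ t ^ 2) ≤ leftEnergy β k α φ t := by
  rw [leftEnergy, mul_left_comm]
  exact mul_le_mul_of_nonneg_left (le_add_of_nonneg_left (sq_nonneg _)) (prolateCoeff_nonneg ht)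

-- The flux and `w φ`, with `w` the weight, stay bounded near `-1`, so in this form the energy is
-- seen to vanish there.
lemma leftEnergy_eq (ht : t ∈ Ioo (-1) 1) :
    leftEnergy β k α φ t = (1 - t) *
      (((1 + t) ^ (1 - β / 2) * prolateFlux β φ t * (1 - t)⁻¹ +
          (β - 2 - (1 + t) / (1 - t)) / 2 *
            ((1 + t) ^ (1 - β / 2) * (prolateWeight β t * φ t))) ^ 2 +
        leftEnergyCoeff β k α t / 4 *
          ((1 + t) ^ (1 - β / 2) * (prolateWeight β t * φ t)) ^ 2) := by
  have hy : 0 < 1 + t := by linarith [ht.1]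
  have hz : 0 < 1 - t := by linarith [ht.2]
  have hw := prolateWeight_pos (β := β) ht.1
  have hsq : ((1 + t) ^ (1 - β / 2)) ^ 2 * prolateWeight β t = 1 + t := by
    rw [prolateWeight, ← rpow_mul_natCast hy.le, ← rpow_add hy, Nat.cast_ofNat,
      show (1 - β / 2) * 2 + (β - 1) = 1 by ring, rpow_one]
  have hp : prolateCoeff β t = (1 - t) * ((1 + t) ^ (1 - β / 2) * prolateWeight β t) ^ 2 := by
    rw [prolateCoeff_eq ht.1]
    linear_combination -(1 - t) * prolateWeight β t * hsq
  rw [leftEnergy, hp]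
  field_simp

lemma abs_flux_div_coeff_le {B : ℝ} (hβ : 1 < β) (ht : t ∈ Ioo (-1) 0)
    (hB : |prolateFlux β φ t| ≤ B) :
    |prolateFlux β φ t / prolateCoeff β t| ≤
      B / (β - 1) * |-((β - 1) / ((1 + t) * prolateWeight β t))| := by
  have hw := prolateWeight_pos (β := β) ht.1
  have hy : 0 < 1 + t := by linarith [ht.1]
  have hβ' : 0 < β - 1 := by linarith
  have hp : (1 + t) * prolateWeight β t ≤ prolateCoeff β t := by
    rw [prolateCoeff_eq ht.1, mul_assoc]
    exact le_mul_of_one_le_left (by positivity) (by linarith [ht.2])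
  calc |prolateFlux β φ t / prolateCoeff β t|
      = |prolateFlux β φ t| / prolateCoeff β t := by
        rw [abs_div, abs_of_pos (lt_of_lt_of_le (by positivity) hp)]
    _ ≤ B / ((1 + t) * prolateWeight β t) := by
        have hB0 : 0 ≤ B := (abs_nonneg _).trans hB
        gcongr
    _ = B / (β - 1) * |-((β - 1) / ((1 + t) * prolateWeight β t))| := by
        rw [abs_neg, abs_of_pos (by positivity)]
        field_simp

namespace IsProlateSolution

lemma hasDerivAt_leftEnergy (h : IsProlateSolution β k α φ) (ht : t ∈ Ioo (-1) 1) :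
    HasDerivAt (leftEnergy β k α φ)
      (leftEnergyRate β k α t * (prolateWeight β t * φ t ^ 2)) t := by
  have hw := prolateWeight_pos (β := β) ht.1
  have hy : 0 < 1 + t := by linarith [ht.1]
  have hz : 0 < 1 - t := by linarith [ht.2]
  have hdy : HasDerivAt (fun s : ℝ ↦ 1 + s) 1 t := (hasDerivAt_id' t).const_add 1
  have hdz : HasDerivAt (fun s : ℝ ↦ 1 - s) (-1) t := (hasDerivAt_id' t).const_sub 1
  have hdρ : HasDerivAt (fun s : ℝ ↦ (1 + s) / (1 - s)) (2 / (1 - t) ^ 2) t :=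
    (hdy.div hdz hz.ne').congr_deriv (by ring)
  have hdw := hasDerivAt_prolateWeight (β := β) ht.1
  have hdφ := h.hasDerivAt ht
  have hdcoeff : HasDerivAt (leftEnergyCoeff β k α) _ t :=
    (((hdy.const_mul (4 * k)).add (hdρ.const_mul (4 * (α - 2 * k) + 2 * β))).add
      (hdρ.pow 2)).add_const (β * (2 - β))
  have hdsq := ((h.hasDerivAt_flux ht).div (hdz.mul hdw) (mul_pos hz hw).ne').add
    (((hdρ.const_sub (β - 2)).div_const 2).mul hdφ)
  refine ((hasDerivAt_prolateCoeff ht.1).mul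
    ((hdsq.pow 2).add ((hdcoeff.div_const 4).mul (hdφ.pow 2)))).congr_deriv ?_
  simp only [Pi.add_apply, Pi.mul_apply, Pi.pow_apply, Pi.div_apply, leftEnergyCoeff,
    leftEnergyRate, prolateCoeff_eq ht.1, Nat.add_one_sub_one, pow_one, Nat.cast_ofNat]
  field_simp
  ring

lemma abs_deriv_flux_le (h : IsProlateSolution β k α φ) (hβ : 1 ≤ β) (ht : t ∈ Ioc (-1) 0) :
    |deriv (prolateFlux β φ) t| ≤ (|α| + |k|) * (1 + prolateWeight β t * φ t ^ 2) := by
  have hw : 0 < prolateWeight β t := prolateWeight_pos ht.1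
  have hpot : |α - k * (1 + t)| ≤ |α| + |k| := by
    refine (abs_sub α _).trans (add_le_add_right ?_ _)
    rw [abs_mul, abs_of_pos (show 0 < 1 + t by linarith [ht.1])]
    exact mul_le_of_le_one_right (abs_nonneg k) (by linarith [ht.2])
  have hφ : |φ t| ≤ 1 + φ t ^ 2 := by
    rw [← sq_abs]
    nlinarith [sq_nonneg (|φ t| - 1)]
  rw [(h.hasDerivAt_flux ⟨ht.1, by linarith [ht.2]⟩).deriv, abs_neg, mul_assoc, abs_mul,
    abs_mul, abs_of_pos hw]
  gcongr
  calc prolateWeight β t * |φ t| ≤ prolateWeight β t * (1 + φ t ^ 2) := by gcongr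
    _ ≤ 1 + prolateWeight β t * φ t ^ 2 := by
        linarith [prolateWeight_le_one hβ ⟨ht.1.le, ht.2⟩]

lemma exists_abs_flux_le (h : IsProlateSolution β k α φ) (hβ : 1 ≤ β)
    (hint : IntervalIntegrable (fun t ↦ prolateWeight β t * φ t ^ 2) volume (-1) 0) :
    ∃ B, ∀ t ∈ Ioo (-1 : ℝ) 0, |prolateFlux β φ t| ≤ B := by
  set bound : ℝ → ℝ := fun t ↦ (|α| + |k|) * (1 + prolateWeight β t * φ t ^ 2)
  have hbound : IntervalIntegrable bound volume (-1) 0 :=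
    (intervalIntegrable_const.add hint).const_mul _
  refine ⟨|prolateFlux β φ 0| + ∫ t in (-1)..0, bound t, fun t ht ↦ ?_⟩
  have hdiff : |prolateFlux β φ 0 - prolateFlux β φ t| ≤ ∫ s in t..0, bound s :=
    norm_sub_le_integral_of_norm_deriv_le_of_le ht.2.le
      (h.continuousOn_flux.mono fun s hs ↦ ⟨by linarith [ht.1, hs.1], by linarith [hs.2]⟩)
      (fun s hs ↦ (h.hasDerivAt_flux ⟨by linarith [ht.1, hs.1],
        by linarith [hs.2]⟩).differentiableAt.differentiableWithinAt)
      (.of_forall fun s hs ↦ h.abs_deriv_flux_le hβ ⟨ht.1.trans hs.1, hs.2.le⟩)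
      (hbound.mono_set (uIcc_subset_uIcc_right (by simp [uIcc_of_le, ht.1.le, ht.2.le])))
  have hmono : ∫ s in t..0, bound s ≤ ∫ s in (-1)..0, bound s := by
    refine intervalIntegral.integral_mono_interval ht.1.le ht.2.le le_rfl ?_ hbound
    filter_upwards [ae_restrict_mem measurableSet_Ioc] with s hs
    exact (abs_nonneg _).trans (h.abs_deriv_flux_le hβ hs)
  have htri := abs_sub_abs_le_abs_sub (prolateFlux β φ t) (prolateFlux β φ 0)
  rw [abs_sub_comm] at htri
  linarith

lemma abs_sub_le_mul_inv_weight_sub_one (h : IsProlateSolution β k α φ) (hβ : 1 < β) {B : ℝ}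
    (hB : ∀ t ∈ Ioo (-1 : ℝ) 0, |prolateFlux β φ t| ≤ B) (ht : t ∈ Ioo (-1) 0) :
    |φ 0 - φ t| ≤ B / (β - 1) * ((prolateWeight β t)⁻¹ - 1) := by
  have hIoi : Icc t 0 ⊆ Ioi (-1) := fun s hs ↦ ht.1.trans_le hs.1
  have hIoo {s : ℝ} (hs : s ∈ Ioo t 0) : s ∈ Ioo (-1 : ℝ) 0 := ⟨ht.1.trans hs.1, hs.2⟩
  have hw0 : (prolateWeight β)⁻¹ 0 = 1 := by simp [prolateWeight]
  have hw1 : 1 ≤ (prolateWeight β)⁻¹ t :=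
    (one_le_inv₀ (prolateWeight_pos ht.1)).2 (prolateWeight_le_one hβ.le ⟨ht.1.le, ht.2.le⟩)
  have hmv := abs_sub_le_mul_abs_sub_of_abs_deriv_le ht.2
    (h.continuousOn.mono fun s hs ↦ ⟨hIoi hs, by linarith [hs.2]⟩)
    (fun s hs ↦ h.hasDerivAt ⟨(hIoo hs).1, by linarith [hs.2]⟩)
    ((continuousOn_prolateWeight.mono hIoi).inv₀ fun s hs ↦ (prolateWeight_pos (hIoi hs)).ne')
    (fun s hs ↦ hasDerivAt_inv_prolateWeight (hIoo hs).1)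
    (fun s hs ↦ neg_ne_zero.2 (div_pos (by linarith) (mul_pos (by linarith [(hIoo hs).1])
      (prolateWeight_pos (hIoo hs).1))).ne')
    fun s hs ↦ abs_flux_div_coeff_le hβ (hIoo hs) (hB s (hIoo hs))
  rwa [hw0, abs_sub_comm 1, abs_of_nonneg (sub_nonneg.2 hw1)] at hmv

lemma exists_abs_weight_mul_le (h : IsProlateSolution β k α φ) (hβ : 1 < β) {B : ℝ}
    (hB : ∀ t ∈ Ioo (-1 : ℝ) 0, |prolateFlux β φ t| ≤ B) :
    ∃ C, ∀ t ∈ Ioo (-1 : ℝ) 0, |prolateWeight β t * φ t| ≤ C := by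
  set K := B / (β - 1)
  refine ⟨|φ 0| + K, fun t ht ↦ ?_⟩
  have hK : 0 ≤ K := div_nonneg ((abs_nonneg _).trans (hB t ht)) (by linarith)
  have hw : 0 < prolateWeight β t := prolateWeight_pos ht.1
  have hw1 : prolateWeight β t ≤ 1 := prolateWeight_le_one hβ.le ⟨ht.1.le, ht.2.le⟩
  have hdiff : |φ 0 - φ t| ≤ K * ((prolateWeight β t)⁻¹ - 1) :=
    h.abs_sub_le_mul_inv_weight_sub_one hβ hB ht
  calc |prolateWeight β t * φ t| = prolateWeight β t * |φ t| := by rw [abs_mul, abs_of_pos hw]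
    _ ≤ prolateWeight β t * (|φ 0| + |φ 0 - φ t|) := by
        gcongr
        linarith [abs_sub_abs_le_abs_sub (φ t) (φ 0), abs_sub_comm (φ 0) (φ t)]
    _ ≤ prolateWeight β t * (|φ 0| + K * ((prolateWeight β t)⁻¹ - 1)) := by gcongr
    _ = prolateWeight β t * |φ 0| + (1 - prolateWeight β t) * K := by field_simp
    _ ≤ 1 * |φ 0| + 1 * K := by gcongr; linarith
    _ = |φ 0| + K := by ring

lemma tendsto_leftEnergy_neg_one (h : IsProlateSolution β k α φ) (hβ : 1 < β) (hβ2 : β < 2)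
    (hint : IntervalIntegrable (fun t ↦ prolateWeight β t * φ t ^ 2) volume (-1) 0) :
    Tendsto (leftEnergy β k α φ) (𝓝[>] (-1)) (𝓝 0) := by
  obtain ⟨B, hB⟩ := h.exists_abs_flux_le hβ.le hint
  obtain ⟨C, hC⟩ := h.exists_abs_weight_mul_le hβ hB
  have hmem : Ioo (-1 : ℝ) 0 ∈ 𝓝[>] (-1) := Ioo_mem_nhdsGT (by norm_num)
  have hpow : Tendsto (fun t : ℝ ↦ (1 + t) ^ (1 - β / 2)) (𝓝[>] (-1)) (𝓝 0) := by
    have hexp : 0 < 1 - β / 2 := by linarith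
    have hcont : Continuous fun t : ℝ ↦ (1 + t) ^ (1 - β / 2) :=
      (continuous_const_add 1).rpow_const fun _ ↦ .inr hexp.le
    exact (hcont.tendsto' _ _ (by simp [zero_rpow hexp.ne'])).mono_left nhdsWithin_le_nhds
  have hflux := bdd_le_mul_tendsto_zero' B (eventually_of_mem hmem hB) hpow
  have hweight := bdd_le_mul_tendsto_zero' C (eventually_of_mem hmem hC) hpow
  have hz : ContinuousAt (fun t : ℝ ↦ 1 - t) (-1) := by fun_prop
  have hz' : ContinuousAt (fun t : ℝ ↦ (1 - t)⁻¹) (-1) := by fun_prop (disch := norm_num)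
  have hlin : ContinuousAt (fun t ↦ (β - 2 - (1 + t) / (1 - t)) / 2) (-1) := by
    fun_prop (disch := norm_num)
  have hcoeff : ContinuousAt (fun t ↦ leftEnergyCoeff β k α t / 4) (-1) := by
    unfold leftEnergyCoeff
    fun_prop (disch := norm_num)
  have hlim := (hz.mono_left nhdsWithin_le_nhds).mul
    ((((hflux.mul (hz'.mono_left nhdsWithin_le_nhds)).add
      ((hlin.mono_left nhdsWithin_le_nhds).mul hweight)).pow 2).add
        ((hcoeff.mono_left nhdsWithin_le_nhds).mul (hweight.pow 2)))
  simp only [zero_mul, mul_zero, add_zero, zero_pow two_ne_zero] at hlim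
  refine hlim.congr' ?_
  filter_upwards [Ioo_mem_nhdsGT (show (-1 : ℝ) < 1 by norm_num)] with t ht
  rw [leftEnergy_eq ht, mul_comm (_ ^ (1 - β / 2)), mul_comm (_ ^ (1 - β / 2))]

lemma continuousOn_leftEnergy (h : IsProlateSolution β k α φ) (hβ : 1 < β) (hβ2 : β < 2)
    (hint : IntervalIntegrable (fun t ↦ prolateWeight β t * φ t ^ 2) volume (-1) 0) :
    ContinuousOn (leftEnergy β k α φ) (Ico (-1) 1) := by
  refine continuousOn_Ico_of_tendsto
    (fun t ht ↦ (h.hasDerivAt_leftEnergy ht).continuousAt.continuousWithinAt) ?_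
  rw [leftEnergy_neg_one (by linarith)]
  exact h.tendsto_leftEnergy_neg_one hβ hβ2 hint

lemma coeff_mul_sq_le_four_mul_integral_left (h : IsProlateSolution β k α φ) (hβ : 1 < β)
    (hβ2 : β < 2) (hk : 0 ≤ k) (hα : 2 * k ≤ α) (hη : (β - 1) / β ≤ η) (hη1 : η < 1)
    (hint : IntervalIntegrable (fun t ↦ prolateWeight β t * φ t ^ 2) volume (-1) η) :
    prolateCoeff β η * φ η ^ 2 ≤ 4 * ∫ t in (-1)..η, prolateWeight β t * φ t ^ 2 := by
  have hη0 : 0 ≤ η := nonneg_of_sub_one_div_le (by linarith) hη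
  have hint0 : IntervalIntegrable (fun t ↦ prolateWeight β t * φ t ^ 2) volume (-1) 0 :=
    hint.mono_set (uIcc_subset_uIcc_left (by simp [uIcc_of_le, show -1 ≤ η by linarith, hη0]))
  have henergy : leftEnergy β k α φ η ≤
      ∫ t in (-1)..η, leftEnergyCoeff β k α η * (prolateWeight β t * φ t ^ 2) := by
    have := intervalIntegral.sub_le_integral_of_hasDeriv_right_of_le (by linarith)
      ((h.continuousOn_leftEnergy hβ hβ2 hint0).mono (Icc_subset_Ico_right hη1))
      (fun t ht ↦ (h.hasDerivAt_leftEnergy ⟨ht.1, by linarith [ht.2]⟩).hasDerivWithinAt)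
      ((intervalIntegrable_iff_integrableOn_Icc_of_le (by linarith)).1
        (hint.const_mul (leftEnergyCoeff β k α η))) fun t ht ↦
        mul_le_mul_of_nonneg_right (leftEnergyRate_le hβ.le hk hα hη hη1 ht.1.le ht.2.le)
          (mul_nonneg (prolateWeight_pos ht.1).le (sq_nonneg _))
    rwa [leftEnergy_neg_one (by linarith), sub_zero] at this
  refine le_of_mul_le_mul_left ?_
    (div_pos (leftEnergyCoeff_pos (by linarith) hβ2 hk hα ⟨by linarith, hη1⟩) four_pos)
  calc leftEnergyCoeff β k α η / 4 * (prolateCoeff β η * φ η ^ 2)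
      ≤ leftEnergy β k α φ η := leftEnergyCoeff_mul_le_leftEnergy ⟨by linarith, hη1.le⟩
    _ ≤ ∫ t in (-1)..η, leftEnergyCoeff β k α η * (prolateWeight β t * φ t ^ 2) := henergy
    _ = _ := by rw [intervalIntegral.integral_const_mul]; ring

lemma coeff_mul_sq_le_four_mul_integral (h : IsProlateSolution β k α φ) (hβ : 1 < β)
    (hk : 0 ≤ k) (hα : 2 * k ≤ α) (hη : (β - 1) / β ≤ η) (hη1 : η ≤ 1)
    (hint : IntervalIntegrable (fun t ↦ prolateWeight β t * φ t ^ 2) volume (-1) 1) :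
    prolateCoeff β η * φ η ^ 2 ≤ 4 * ∫ t in (-1)..1, prolateWeight β t * φ t ^ 2 := by
  have hη0 : 0 ≤ η := nonneg_of_sub_one_div_le (by linarith) hη
  refine (h.coeff_mul_sq_le_four_mul_integral_right hβ hk hα hη hη1).trans ?_
  gcongr
  refine intervalIntegral.integral_mono_interval (by linarith) hη1 le_rfl ?_ hint
  filter_upwards [ae_restrict_mem measurableSet_Ioc] with t ht
  exact mul_nonneg (prolateWeight_pos ht.1).le (sq_nonneg _)

lemma coeff_mul_sq_le_two_mul_integral (h : IsProlateSolution β k α φ) (hβ : 1 < β)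
    (hβ2 : β < 2) (hk : 0 ≤ k) (hα : 2 * k ≤ α) (hη : (β - 1) / β ≤ η) (hη1 : η < 1)
    (hint : IntervalIntegrable (fun t ↦ prolateWeight β t * φ t ^ 2) volume (-1) 1) :
    prolateCoeff β η * φ η ^ 2 ≤ 2 * ∫ t in (-1)..1, prolateWeight β t * φ t ^ 2 := by
  have hη0 : 0 ≤ η := nonneg_of_sub_one_div_le (by linarith) hη
  have hmem : η ∈ uIcc (-1) 1 := by
    rw [uIcc_of_le (by norm_num)]
    exact ⟨by linarith, hη1.le⟩
  have hintl := hint.mono_set (uIcc_subset_uIcc_left hmem)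
  have hsplit := intervalIntegral.integral_add_adjacent_intervals hintl
    (hint.mono_set (uIcc_subset_uIcc_right hmem))
  linarith [h.coeff_mul_sq_le_four_mul_integral_left hβ hβ2 hk hα hη hη1 hintl,
    h.coeff_mul_sq_le_four_mul_integral_right hβ hk hα hη hη1.le]

lemma coeff_mul_sq_le_mul_integral (h : IsProlateSolution β k α φ) (hβ : 3 / 2 ≤ β)
    (hk : 0 ≤ k) (hα : 2 * k ≤ α) (hη : (β - 1) / β ≤ η) (hη1 : η < 1)
    (hint : IntervalIntegrable (fun t ↦ prolateWeight β t * φ t ^ 2) volume (-1) 1) :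
    prolateCoeff β η * φ η ^ 2 ≤
      4 * (β - 1) * ∫ t in (-1)..1, prolateWeight β t * φ t ^ 2 := by
  have hmass : 0 ≤ ∫ t in (-1)..1, prolateWeight β t * φ t ^ 2 :=
    intervalIntegral.integral_nonneg (by norm_num) fun t ht ↦
      mul_nonneg (prolateWeight_nonneg ht.1) (sq_nonneg _)
  obtain hβ2 | hβ2 := lt_or_ge β 2
  · refine (h.coeff_mul_sq_le_two_mul_integral (by linarith) hβ2 hk hα hη hη1 hint).trans ?_
    gcongr
    linarith
  · refine (h.coeff_mul_sq_le_four_mul_integral (by linarith) hk hα hη hη1.le hint).trans ?_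
    gcongr
    linarith

end IsProlateSolution

end Prolate

theorem stmt_7_general {c α β : ℝ} (hα : c ^ 2 / 4 ≤ α) (hβ : 3 / 2 ≤ β) {φ : ℝ → ℝ}
    (hreg : ContDiffOn ℝ 2 φ (Ioo (-1) 1))
    (hode : ∀ η ∈ Ioo (-1 : ℝ) 1,
      deriv (fun t ↦ (1 - t) * (1 + t) ^ β * deriv φ t) η +
        (α - c ^ 2 * (1 + η) / 8) * (1 + η) ^ (β - 1) * φ η = 0)
    (hcont : ContinuousWithinAt φ (Ioo (-1) 1) 1)
    (hnorm : ∫ t in (-1)..1, (1 + t) ^ (β - 1) * φ t ^ 2 = 2 ^ (β - 1)) :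
    ∀ η ∈ Icc ((β - 1) / β) 1,
      √((1 - η) * (1 + η) ^ β) * |φ η| ≤ √(2 ^ (β + 1) * (β - 1)) := by
  intro η hη
  obtain rfl | hη1 := hη.2.eq_or_lt
  · simp
  have hsol : IsProlateSolution β (c ^ 2 / 8) α φ :=
    ⟨hreg, fun t ht ↦ by rw [← hode t ht, mul_div_right_comm]; rfl, hcont⟩
  have hint : IntervalIntegrable (fun t ↦ prolateWeight β t * φ t ^ 2) volume (-1) 1 := by
    by_contra hint
    exact (rpow_pos_of_pos two_pos (β - 1)).ne (hnorm ▸ (intervalIntegral.integral_undef hint).symm)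
  have hη0 : 0 ≤ η := nonneg_of_sub_one_div_le (by linarith) hη.1
  have hp : 0 ≤ (1 - η) * (1 + η) ^ β := prolateCoeff_nonneg ⟨by linarith, hη.2⟩
  rw [← sqrt_sq_eq_abs, ← sqrt_mul hp]
  refine sqrt_le_sqrt ?_
  calc (1 - η) * (1 + η) ^ β * φ η ^ 2
      ≤ 4 * (β - 1) * ∫ t in (-1)..1, (1 + t) ^ (β - 1) * φ t ^ 2 :=
        hsol.coeff_mul_sq_le_mul_integral hβ (by positivity) (by linarith) hη.1 hη1 hint
    _ = 2 ^ (β + 1) * (β - 1) := by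
        rw [hnorm, show β + 1 = β - 1 + 2 by ring, rpow_add two_pos]
        norm_num
        ring

/-- For the radial prolate equation with `2m+d ≥ 3` and `α > c²/4`, a solution
normalized by `∫_{-1}^1 (1+t)^{β-1} φ(t)² dt = 2^{β-1}` satisfies
`√((1-η)(1+η)^β)·|φ(η)| ≤ √(2^{β+1}(β-1))` on `[a,1]`. -/
theorem stmt_7 (m d : ℕ) (hd : 1 ≤ d) (hmd : 3 ≤ 2 * m + d)
    (c α : ℝ) (hc : 0 < c) (hα : c ^ 2 / 4 < α)
    (β a : ℝ) (hβ : β = (m : ℝ) + (d : ℝ) / 2)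
    (ha : a = (2 * (m : ℝ) + (d : ℝ) - 2) / (2 * (m : ℝ) + (d : ℝ)))
    (φ : ℝ → ℝ)
    (hreg : ContDiffOn ℝ 2 φ (Set.Ioo (-1 : ℝ) 1))
    (hode : ∀ η ∈ Set.Ioo (-1 : ℝ) 1,
      deriv (fun t : ℝ => (1 - t) * (1 + t) ^ β * deriv φ t) η +
        (α - c ^ 2 * (1 + η) / 8) * (1 + η) ^ (β - 1) * φ η = 0)
    (hcont : ContinuousWithinAt φ (Set.Ioo (-1 : ℝ) 1) 1)
    (hnorm : (∫ t in (-1 : ℝ)..1, (1 + t) ^ (β - 1) * φ t ^ 2) = 2 ^ (β - 1)) :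
    ∀ η ∈ Set.Icc a 1,
      Real.sqrt ((1 - η) * (1 + η) ^ β) * |φ η| ≤ Real.sqrt (2 ^ (β + 1) * (β - 1)) := by
  have hmd' : (3 : ℝ) ≤ 2 * m + d := by exact_mod_cast hmd
  have haβ : a = (β - 1) / β := by rw [ha, hβ]; field_simp
  exact haβ ▸ stmt_7_general hα.le (by linarith) hreg hode hcont hnorm

end
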